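/- arXiv:2009.00446 — 5 statements merged into one kernel-verified Lean document; each statement's English description precedes it below -/
import Mathlib

section
/- ∫_{−π/2}^{π/2} cos θ · sin((π/2) cos θ) · e^{−(π/2) sin θ} / (cosh(π sin θ) − cos(π cos θ)) dθ = 1/2 + π²/48. -/
open Filter Topology

lemma aux_lim1 : Tendsto (fun w : ℂ => w / Complex.sin w) (𝓝[≠] 0) (𝓝 1) := by
  have h := (Complex.hasDerivAt_sin 0)
  rw [hasDerivAt_iff_tendsto_slope] at h
  have h2 := h.inv₀ (by simp)
  simp only [Complex.cos_zero, inv_one] at h2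
  refine h2.congr fun w => ?_
  simp [slope_def_field]

lemma aux_lim2 : Tendsto (fun w : ℂ => (w - Complex.sin w) / w ^ 3) (𝓝[≠] 0) (𝓝 (1 / 6)) := by
  rw [tendsto_iff_norm_sub_tendsto_zero]
  have hz : Tendsto (fun w : ℂ => ‖w‖ ^ 2 / 100) (𝓝[≠] 0) (𝓝 0) := by
    have : Continuous (fun w : ℂ => ‖w‖ ^ 2 / 100) := by fun_prop
    have h := this.tendsto 0
    simp only [norm_zero, ne_eq, OfNat.ofNat_ne_zero, not_false_eq_true, zero_pow, zero_div] at h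
    exact h.mono_left nhdsWithin_le_nhds
  refine squeeze_zero' (Eventually.of_forall fun _ => norm_nonneg _) ?_ hz
  have hb : ∀ᶠ w : ℂ in 𝓝[≠] 0, w ∈ Metric.closedBall (0:ℂ) 1 :=
    nhdsWithin_le_nhds (Metric.closedBall_mem_nhds _ one_pos)
  filter_upwards [hb, self_mem_nhdsWithin] with w hw hw0
  have hw0 : w ≠ 0 := hw0
  have hb := Complex.sin_bound (x := w) (by simpa using hw)
  have e : (w - Complex.sin w) / w ^ 3 - 1 / 6 = -(Complex.sin w - (w - w ^ 3 / 6)) / w ^ 3 := by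
    field_simp; ring
  have : 0 < ‖w‖ := norm_pos_iff.2 hw0
  rw [e, norm_div, norm_neg, norm_pow, div_le_iff₀ (by positivity)]
  calc _ ≤ _ := hb
    _ = _ := by ring

lemma aux_sin_ne {z : ℂ} (h0 : z ≠ 0) (h1 : ‖z‖ ≤ 1) : Complex.sin (Real.pi / 2 * z) ≠ 0 := by
  intro h
  obtain ⟨k, hk⟩ := Complex.sin_eq_zero_iff.1 h
  have hp : (Real.pi : ℂ) ≠ 0 := by exact_mod_cast Real.pi_ne_zero
  have hz : z = ((2 * k : ℤ) : ℂ) := by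
    push_cast
    have : (Real.pi : ℂ) * (z - 2 * k) = 0 := by linear_combination 2 * hk
    rcases mul_eq_zero.1 this with h | h
    · exact absurd h hp
    · exact sub_eq_zero.1 h
  rw [hz, Complex.norm_intCast] at h1
  have h2 : |(2 * k : ℤ)| ≤ 1 := by exact_mod_cast h1
  have : k = 0 := by
    rw [abs_le] at h2; omega
  apply h0; rw [hz, this]; simp

lemma aux_lim : Tendsto (fun z : ℂ => ((z ^ 2 + 1) * z / Complex.sin (Real.pi / 2 * z) - 2 / Real.pi) / z ^ 2)
    (𝓝[≠] 0) (𝓝 (2 / Real.pi + Real.pi / 12 : ℂ)) := by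
  have hp : (Real.pi : ℂ) ≠ 0 := by exact_mod_cast Real.pi_ne_zero
  have hw : Tendsto (fun z : ℂ => (Real.pi / 2 : ℂ) * z) (𝓝[≠] 0) (𝓝[≠] 0) := by
    apply tendsto_nhdsWithin_of_tendsto_nhds_of_eventually_within
    · have : Continuous (fun z : ℂ => (Real.pi / 2 : ℂ) * z) := by fun_prop
      have h := this.tendsto 0
      simp only [mul_zero] at h
      exact h.mono_left nhdsWithin_le_nhds
    · filter_upwards [self_mem_nhdsWithin] with z hz
      have hz : z ≠ 0 := hz
      simp [hz, hp]
  have h1 := aux_lim1.comp hw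
  have h2 := aux_lim2.comp hw
  have h3 := (h1.const_mul (2 / Real.pi : ℂ)).add ((h1.mul h2).const_mul (Real.pi / 2 : ℂ))
  have e : (2 / Real.pi + Real.pi / 12 : ℂ) = 2 / Real.pi * 1 + Real.pi / 2 * (1 * (1 / 6)) := by ring
  rw [e]
  refine h3.congr' ?_
  have hb : ∀ᶠ w : ℂ in 𝓝[≠] 0, w ∈ Metric.closedBall (0:ℂ) 1 :=
    nhdsWithin_le_nhds (Metric.closedBall_mem_nhds _ one_pos)
  filter_upwards [hb, self_mem_nhdsWithin] with z hz hz0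
  have hz0 : z ≠ 0 := hz0
  have hs := aux_sin_ne hz0 (by simpa using hz)
  simp only [Function.comp]
  generalize Complex.sin (Real.pi / 2 * z) = s at hs ⊢
  field_simp
  ring

lemma aux_circle : (∮ z in C(0, 1), (z ^ 2 + 1) / (z ^ 2 * Complex.sin (Real.pi / 2 * z)))
    = (2 * Real.pi * Complex.I) * (2 / Real.pi + Real.pi / 12) := by
  have key := Complex.circleIntegral_sub_center_inv_smul_of_differentiable_on_off_countable_of_tendsto
    (c := 0) (R := 1) one_pos (s := ∅) Set.countable_empty
    (f := fun z : ℂ => ((z ^ 2 + 1) * z / Complex.sin (Real.pi / 2 * z) - 2 / Real.pi) / z ^ 2)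
    (y := (2 / Real.pi + Real.pi / 12 : ℂ)) ?_ ?_ aux_lim
  · rw [smul_eq_mul] at key
    rw [← key]
    have hz := circleIntegral.integral_sub_zpow_of_ne (n := -3) (by norm_num) 0 0 1
    have e : (∮ z in C(0, 1), (2 / Real.pi : ℂ) * (z - 0) ^ (-3 : ℤ)) = 0 := by
      rw [circleIntegral.integral_const_mul, hz, mul_zero]
    refine (sub_zero _).symm.trans ((congrArg _ e.symm).trans ?_)
    rw [← circleIntegral.integral_sub]
    · apply circleIntegral.integral_congr zero_le_one
      intro z hz
      have hn : ‖z‖ = 1 := by simpa using hz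
      have hz0 : z ≠ 0 := by rintro rfl; simp at hn
      have hs := aux_sin_ne hz0 hn.le
      simp only [smul_eq_mul, sub_zero]
      generalize Complex.sin (Real.pi / 2 * z) = s at hs ⊢
      rw [zpow_neg, show (3:ℤ) = ((3:ℕ):ℤ) by rfl, zpow_natCast]
      field_simp
    · apply ContinuousOn.circleIntegrable zero_le_one
      refine ContinuousOn.div (by fun_prop) (by fun_prop) ?_
      intro z hz
      have hn : ‖z‖ = 1 := by simpa using hz
      have hz0 : z ≠ 0 := by rintro rfl; simp at hn
      exact mul_ne_zero (pow_ne_zero _ hz0) (aux_sin_ne hz0 hn.le)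
    · apply ContinuousOn.circleIntegrable zero_le_one
      refine ContinuousOn.mul (by fun_prop) (ContinuousOn.zpow₀ (by fun_prop) _ ?_)
      intro z hz
      have hn : ‖z‖ = 1 := by simpa using hz
      left
      rintro h; rw [sub_zero] at h; simp [h] at hn
  · intro z hz
    have hz0 : z ≠ 0 := hz.2
    have hs := aux_sin_ne hz0 (by simpa using hz.1)
    apply ContinuousAt.continuousWithinAt
    have := pow_ne_zero 2 hz0
    fun_prop (disch := assumption)
  · intro z hz
    have hz0 : z ≠ 0 := hz.1.2
    have h1 : ‖z‖ < 1 := by simpa using hz.1.1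
    have hs := aux_sin_ne hz0 h1.le
    have := pow_ne_zero 2 hz0
    fun_prop (disch := assumption)

/-- the denominator -/
noncomputable def auxD (θ : ℝ) : ℝ :=
  Real.cosh (Real.pi * Real.sin θ) - Real.cos (Real.pi * Real.cos θ)

lemma aux_exp (θ : ℝ) : (Real.pi / 2 : ℂ) * Complex.exp (θ * Complex.I) =
    ((Real.pi / 2 * Real.cos θ : ℝ) : ℂ) + ((Real.pi / 2 * Real.sin θ : ℝ) : ℂ) * Complex.I := by
  rw [Complex.exp_mul_I]; push_cast; ring

lemma aux_sin (x y : ℝ) : Complex.sin (x + y * Complex.I) =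
    ((Real.sin x * Real.cosh y : ℝ) : ℂ) + ((Real.cos x * Real.sinh y : ℝ) : ℂ) * Complex.I := by
  rw [Complex.sin_add_mul_I]; push_cast; ring

lemma auxD_eq (θ : ℝ) : auxD θ =
    2 * Complex.normSq (Complex.sin (Real.pi / 2 * Complex.exp (θ * Complex.I))) := by
  rw [aux_exp, aux_sin, Complex.normSq_add_mul_I, auxD,
    show Real.pi * Real.sin θ = 2 * (Real.pi / 2 * Real.sin θ) by ring,
    show Real.pi * Real.cos θ = 2 * (Real.pi / 2 * Real.cos θ) by ring,
    Real.cosh_two_mul, Real.cos_two_mul]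
  generalize Real.pi / 2 * Real.sin θ = y
  generalize Real.pi / 2 * Real.cos θ = x
  have h1 := Real.sin_sq_add_cos_sq x
  have h2 := Real.cosh_sq y
  linear_combination (-2 * Real.cosh y ^ 2) * h1 + (-1 + 2 * Real.cos x ^ 2) * h2

lemma auxD_pos (θ : ℝ) : 0 < auxD θ := by
  rw [auxD_eq]
  have : Complex.sin (Real.pi / 2 * Complex.exp (θ * Complex.I)) ≠ 0 :=
    aux_sin_ne (Complex.exp_ne_zero _) (by rw [Complex.norm_exp_ofReal_mul_I])
  have := Complex.normSq_pos.2 this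
  positivity

/-- the even part of the integrand -/
noncomputable def auxH (θ : ℝ) : ℝ :=
  Real.cos θ * Real.sin (Real.pi/2 * Real.cos θ) * Real.cosh (Real.pi/2 * Real.sin θ) / auxD θ

lemma auxD_cont : Continuous auxD := by
  unfold auxD; fun_prop

lemma auxH_cont : Continuous auxH := by
  unfold auxH
  exact Continuous.div (by fun_prop) auxD_cont (fun θ => (auxD_pos θ).ne')

lemma auxH_periodic : Function.Periodic auxH Real.pi := by
  intro θ
  simp [auxH, auxD, Real.cos_add_pi, Real.sin_add_pi]

lemma auxH_integral : ∫ θ in (0:ℝ)..(2 * Real.pi), auxH θ = 1 + Real.pi ^ 2 / 24 := by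
  have h := aux_circle
  rw [circleIntegral] at h
  have e : ∀ θ : ℝ, (deriv (circleMap 0 1) θ • ((circleMap 0 1 θ ^ 2 + 1) /
      (circleMap 0 1 θ ^ 2 * Complex.sin (Real.pi / 2 * circleMap 0 1 θ)))).im = 4 * auxH θ := by
    intro θ
    have hd := auxD_eq θ
    have hD := auxD_pos θ
    rw [deriv_circleMap]
    simp only [circleMap_zero, Complex.ofReal_one, one_mul, smul_eq_mul]
    have hc : Complex.exp (θ * Complex.I) ^ 2 + 1
        = Complex.exp (θ * Complex.I) * ((2 * Real.cos θ : ℝ) : ℂ) := by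
      push_cast
      rw [Complex.two_cos, mul_add, ← Complex.exp_add, ← Complex.exp_add, sq, ← Complex.exp_add]
      simp
    have hz : Complex.exp (θ * Complex.I) ≠ 0 := Complex.exp_ne_zero _
    have hre : (Complex.sin (Real.pi / 2 * Complex.exp (θ * Complex.I))).re
        = Real.sin (Real.pi/2 * Real.cos θ) * Real.cosh (Real.pi/2 * Real.sin θ) := by
      rw [aux_exp, aux_sin]; simp [-Complex.ofReal_mul]
    have hs : Complex.sin (Real.pi / 2 * Complex.exp (θ * Complex.I)) ≠ 0 :=
      aux_sin_ne hz (by rw [Complex.norm_exp_ofReal_mul_I])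
    rw [hc]
    generalize Complex.exp (θ * Complex.I) = z at *
    generalize Complex.sin (Real.pi / 2 * z) = s at *
    have e2 : z * Complex.I * (z * ((2 * Real.cos θ : ℝ) : ℂ) / (z ^ 2 * s))
        = ((2 * Real.cos θ : ℝ) : ℂ) * (Complex.I * s⁻¹) := by
      field_simp
    rw [e2, Complex.im_ofReal_mul, Complex.I_mul_im, Complex.inv_re, hre, auxH, hd]
    have : Complex.normSq s ≠ 0 := (Complex.normSq_pos.2 hs).ne'
    field_simp
    ring
  have hint : IntervalIntegrable (fun θ : ℝ => deriv (circleMap 0 1) θ • ((circleMap 0 1 θ ^ 2 + 1) /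
      (circleMap 0 1 θ ^ 2 * Complex.sin (Real.pi / 2 * circleMap 0 1 θ)))) MeasureTheory.volume 0 (2 * Real.pi) := by
    apply Continuous.intervalIntegrable
    simp only [deriv_circleMap, circleMap_zero, Complex.ofReal_one, one_mul, smul_eq_mul]
    refine Continuous.mul (by fun_prop) (Continuous.div (by fun_prop) (by fun_prop) fun θ => ?_)
    exact mul_ne_zero (pow_ne_zero _ (Complex.exp_ne_zero _))
      (aux_sin_ne (Complex.exp_ne_zero _) (by rw [Complex.norm_exp_ofReal_mul_I]))
  have him := intervalIntegral.intervalIntegral_im hint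
  simp only [RCLike.im_to_complex] at him
  have hp : (Real.pi : ℂ) ≠ 0 := by exact_mod_cast Real.pi_ne_zero
  have hv : (2 * Real.pi * Complex.I) * (2 / Real.pi + Real.pi / 12) =
      ((4 + Real.pi ^ 2 / 6 : ℝ) : ℂ) * Complex.I := by
    push_cast; field_simp; ring
  simp only [e] at him
  rw [h, hv, intervalIntegral.integral_const_mul] at him
  simp only [Complex.im_ofReal_mul, Complex.I_im] at him
  linarith

/-- `∫_{-π/2}^{π/2} cos θ · sin((π/2) cos θ) · e^{-(π/2) sin θ}
   / (cosh(π sin θ) - cos(π cos θ)) dθ = 1/2 + π²/48`. -/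
theorem stmt_14 :
    ∫ θ in (-(Real.pi/2))..(Real.pi/2),
        Real.cos θ * Real.sin (Real.pi/2 * Real.cos θ) *
          Real.exp (-(Real.pi/2) * Real.sin θ) /
          (Real.cosh (Real.pi * Real.sin θ) - Real.cos (Real.pi * Real.cos θ))
      = 1/2 + Real.pi ^ 2 / 48 := by
  set G : ℝ → ℝ := fun θ => Real.cos θ * Real.sin (Real.pi/2 * Real.cos θ) *
          Real.exp (-(Real.pi/2) * Real.sin θ) /
          (Real.cosh (Real.pi * Real.sin θ) - Real.cos (Real.pi * Real.cos θ)) with hG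
  have hGc : Continuous G := by
    exact Continuous.div (by fun_prop) auxD_cont (fun θ => (auxD_pos θ).ne')
  have hneg : ∫ θ in (-(Real.pi/2))..(Real.pi/2), G (-θ) =
      ∫ θ in (-(Real.pi/2))..(Real.pi/2), G θ := by
    rw [intervalIntegral.integral_comp_neg, neg_neg]
  have hsum : ∫ θ in (-(Real.pi/2))..(Real.pi/2), (G θ + G (-θ)) =
      ∫ θ in (-(Real.pi/2))..(Real.pi/2), 2 * auxH θ := by
    congr 1
    ext θ
    simp only [hG, auxH, auxD, Real.cos_neg, Real.sin_neg, mul_neg, Real.cosh_neg]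
    rw [Real.cosh_eq (Real.pi / 2 * Real.sin θ)]
    simp only [neg_mul, neg_neg]
    ring
  rw [intervalIntegral.integral_add (hGc.intervalIntegrable _ _)
    (Continuous.intervalIntegrable (u := fun θ => G (-θ)) (hGc.comp continuous_neg) _ _), hneg,
    intervalIntegral.integral_const_mul] at hsum
  have h1 := auxH_periodic.intervalIntegral_add_eq (-(Real.pi/2)) 0
  have h2 := auxH_periodic.intervalIntegral_add_zsmul_eq 2 0
    (fun a b => auxH_cont.intervalIntegrable a b)
  have h3 := auxH_integral
  rw [show -(Real.pi/2) + Real.pi = Real.pi / 2 by ring] at h1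
  simp only [zsmul_eq_mul, Int.cast_ofNat, zero_add] at h1 h2
  rw [h3] at h2
  change ∫ θ in (-(Real.pi/2))..(Real.pi/2), G θ = _
  linarith
end

section
/- ∫₀¹ (cosh(πv/2) cos(πv/2) + sinh(πv/2) sin(πv/2)) / (cosh(πv) + cos(πv)) dv = 1/2. -/
theorem stmt_15_pos {v : ℝ} (h0 : 0 ≤ v) (h1 : v ≤ 1) :
    0 < Real.sinh (Real.pi * v / 2) + Real.cos (Real.pi * v / 2) := by
  have hp := Real.pi_pos
  have ha : 0 ≤ Real.pi * v / 2 := by positivity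
  have hb : Real.pi * v / 2 ≤ Real.pi / 2 := by nlinarith
  have hc : 0 ≤ Real.cos (Real.pi * v / 2) := Real.cos_nonneg_of_mem_Icc ⟨by linarith, hb⟩
  rcases h0.eq_or_lt with h | h
  · subst h; simp
  · have : 0 < Real.sinh (Real.pi * v / 2) := Real.sinh_pos_iff.2 (by positivity)
    linarith

theorem stmt_15_den (v : ℝ) : Real.cosh (Real.pi * v) + Real.cos (Real.pi * v) =
    2 * (Real.sinh (Real.pi * v / 2) ^ 2 + Real.cos (Real.pi * v / 2) ^ 2) := by
  have e : Real.pi * v = 2 * (Real.pi * v / 2) := by ring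
  have h1 := Real.cosh_two_mul (Real.pi * v / 2)
  have h2 := Real.cos_two_mul (Real.pi * v / 2)
  have h3 := Real.cosh_sq (Real.pi * v / 2)
  rw [← e] at h1 h2
  rw [h1, h2, h3]; ring

theorem stmt_15_den_pos {v : ℝ} (h0 : 0 ≤ v) (h1 : v ≤ 1) :
    0 < Real.sinh (Real.pi * v / 2) ^ 2 + Real.cos (Real.pi * v / 2) ^ 2 := by
  have := stmt_15_pos h0 h1
  nlinarith [sq_nonneg (Real.sinh (Real.pi * v / 2) - Real.cos (Real.pi * v / 2)), mul_pos this this]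

/-- `∫₀¹ (cosh(πv/2) cos(πv/2) + sinh(πv/2) sin(πv/2)) / (cosh(πv) + cos(πv)) dv = 1/2`. -/
theorem stmt_15 :
    ∫ v in (0:ℝ)..1,
        (Real.cosh (Real.pi * v / 2) * Real.cos (Real.pi * v / 2) +
          Real.sinh (Real.pi * v / 2) * Real.sin (Real.pi * v / 2)) /
          (Real.cosh (Real.pi * v) + Real.cos (Real.pi * v))
      = 1/2 := by
  have hp := Real.pi_pos
  rw [intervalIntegral.integral_eq_sub_of_hasDerivAt
    (f := fun v => Real.arctan ((Real.sinh (Real.pi * v / 2) - Real.cos (Real.pi * v / 2)) /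
      (Real.sinh (Real.pi * v / 2) + Real.cos (Real.pi * v / 2))) / Real.pi)]
  · have hs : 0 < Real.sinh (Real.pi / 2) := Real.sinh_pos_iff.2 (by positivity)
    simp [hs.ne', Real.arctan_neg]
    field_simp
    norm_num
  · intro v hv
    rw [Set.uIcc_of_le zero_le_one] at hv
    have h1 := stmt_15_pos hv.1 hv.2
    have h2 := stmt_15_den_pos hv.1 hv.2
    rw [stmt_15_den]
    have hl : HasDerivAt (fun v : ℝ => Real.pi * v / 2) (Real.pi / 2) v := by
      simpa using ((hasDerivAt_id v).const_mul Real.pi).div_const 2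
    have hS := hl.sinh
    have hC := hl.cos
    refine ((((hS.sub hC).div (hS.add hC) h1.ne').arctan).div_const Real.pi).congr_deriv ?_
    simp only [Pi.sub_apply, Pi.add_apply, Pi.div_apply]
    generalize Real.sinh (Real.pi * v / 2) = s at *
    generalize Real.cos (Real.pi * v / 2) = c at *
    have h3 : (s + c) ^ 2 + (s - c) ^ 2 ≠ 0 := by nlinarith
    have h4 : 1 + ((s - c) / (s + c)) ^ 2 = 2 * (s ^ 2 + c ^ 2) / (s + c) ^ 2 := by
      field_simp; ring
    rw [h4]
    field_simp
    ring
  · apply ContinuousOn.intervalIntegrable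
    intro v hv
    rw [Set.uIcc_of_le zero_le_one] at hv
    have h2 := stmt_15_den_pos hv.1 hv.2
    apply ContinuousAt.continuousWithinAt
    apply ContinuousAt.div (by fun_prop) (by fun_prop)
    rw [stmt_15_den]; positivity
end

section
/- ∫₀¹ [cos(πv/2) cosh(πv/2)(2v² − 1) − (2v² − 4v + 1) sin(πv/2) sinh(πv/2)] / [(cosh(πv) + cos(πv))(2v² − 2v + 1)²] dv = −π²/48. -/
noncomputable def auxK (z : ℂ) : ℂ := 1 / (z ^ 2 * Complex.sin z) - 1 / z ^ 3 - 1 / (6 * z)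

lemma sin_ne_aux {z : ℂ} (hz : z ∈ Metric.ball (0:ℂ) Real.pi) (h0 : z ≠ 0) :
    Complex.sin z ≠ 0 := by
  intro h
  rw [Complex.sin_eq_zero_iff] at h
  obtain ⟨k, rfl⟩ := h
  have hk : k ≠ 0 := by
    rintro rfl
    simp at h0
  have h1 : (1:ℝ) ≤ |(k:ℝ)| := by
    have := Int.one_le_abs hk
    exact_mod_cast this
  rw [mem_ball_zero_iff, norm_mul, Complex.norm_intCast, Complex.norm_real, Real.norm_eq_abs,
    abs_of_pos Real.pi_pos] at hz
  nlinarith [Real.pi_pos]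

lemma auxK_bound {z : ℂ} (h0 : z ≠ 0) (hz : ‖z‖ ≤ 1) : ‖auxK z‖ ≤ 1 := by
  have hE := Complex.sin_bound hz
  set E := Complex.sin z - (z - z ^ 3 / 6) with hEdef
  have hs : Complex.sin z = z - z ^ 3 / 6 + E := by rw [hEdef]; ring
  have hr : 0 < ‖z‖ := norm_pos_iff.mpr h0
  have p2 : ‖z‖ ^ 2 ≤ 1 := pow_le_one₀ hr.le hz
  have p3 : ‖z‖ ^ 3 ≤ ‖z‖ := by nlinarith
  have p5 : ‖z‖ ^ 5 ≤ ‖z‖ := by nlinarith [pow_pos hr 3]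
  have hslow : ‖z‖ / 2 ≤ ‖Complex.sin z‖ := by
    have h1 : ‖z‖ ≤ ‖Complex.sin z‖ + ‖z ^ 3 / 6‖ + ‖E‖ := by
      have : z = Complex.sin z + z ^ 3 / 6 - E := by rw [hs]; ring
      calc ‖z‖ = ‖Complex.sin z + z ^ 3 / 6 - E‖ := by rw [← this]
        _ ≤ _ := (norm_sub_le _ _).trans (by gcongr; exact norm_add_le _ _)
    have h2 : ‖z ^ 3 / 6‖ = ‖z‖ ^ 3 / 6 := by simp
    rw [h2] at h1
    linarith
  have hsne : Complex.sin z ≠ 0 := norm_pos_iff.mp (by linarith)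
  have hK : auxK z = (-6 * E + z ^ 5 / 6 - z ^ 2 * E) / (6 * z ^ 3 * Complex.sin z) := by
    have : -6 * E + z ^ 5 / 6 - z ^ 2 * E
        = 6 * z - 6 * Complex.sin z - z ^ 2 * Complex.sin z := by rw [hs]; ring
    rw [this, auxK]
    field_simp
  have hnum : ‖-6 * E + z ^ 5 / 6 - z ^ 2 * E‖ ≤ ‖z‖ ^ 4 := by
    have h1 : ‖-6 * E + z ^ 5 / 6 - z ^ 2 * E‖ ≤ 6 * ‖E‖ + ‖z‖ ^ 5 / 6 + ‖z‖ ^ 2 * ‖E‖ := by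
      refine (norm_sub_le _ _).trans ?_
      refine (add_le_add_left (norm_add_le _ _) _).trans ?_
      simp
    have h5 : ‖z‖ ^ 5 ≤ ‖z‖ ^ 4 := by nlinarith [pow_pos hr 4]
    have h6 : ‖z‖ ^ 2 * ‖E‖ ≤ ‖E‖ := by nlinarith [norm_nonneg E]
    nlinarith [pow_pos hr 4]
  rw [hK, norm_div, div_le_one (norm_pos_iff.mpr
    (mul_ne_zero (mul_ne_zero (by norm_num) (pow_ne_zero 3 h0)) hsne))]
  refine hnum.trans ?_
  rw [norm_mul, norm_mul, norm_pow]
  have : ‖(6:ℂ)‖ = 6 := by simp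
  rw [this]
  nlinarith [pow_pos hr 3, pow_pos hr 4]

lemma exists_prim : ∃ H : ℂ → ℂ, (∀ z ∈ Metric.ball (0:ℂ) Real.pi, DifferentiableAt ℂ H z) ∧
    ∀ z ∈ Metric.ball (0:ℂ) Real.pi, z ≠ 0 → HasDerivAt H (auxK z) z := by
  have hd : DifferentiableOn ℂ auxK (Metric.ball (0:ℂ) Real.pi \ {0}) := by
    intro z hz
    have h0 : z ≠ 0 := by simpa using hz.2
    have hs := sin_ne_aux hz.1 h0
    apply DifferentiableAt.differentiableWithinAt
    unfold auxK
    have h1 : z ^ 2 * Complex.sin z ≠ 0 := mul_ne_zero (pow_ne_zero 2 h0) hs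
    have h2 : z ^ 3 ≠ 0 := pow_ne_zero 3 h0
    have h3 : 6 * z ≠ 0 := mul_ne_zero (by norm_num) h0
    have h4 : DifferentiableAt ℂ Complex.sin z := Complex.differentiable_sin z
    fun_prop (disch := assumption)
  have ho : (fun z => auxK z - auxK 0) =o[nhdsWithin 0 {0}ᶜ] fun z => (z - (0:ℂ))⁻¹ := by
    apply Filter.IsBoundedUnder.isLittleO_sub_self_inv
    refine ⟨1, ?_⟩
    rw [Filter.eventually_map]
    have hb : Metric.closedBall (0:ℂ) 1 ∈ nhdsWithin (0:ℂ) {0}ᶜ :=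
      mem_nhdsWithin_of_mem_nhds (Metric.closedBall_mem_nhds _ one_pos)
    filter_upwards [hb, self_mem_nhdsWithin] with z hz h0
    have : auxK 0 = 0 := by simp [auxK]
    simp only [Function.comp, this, sub_zero]
    exact auxK_bound (by simpa using h0) (by simpa using hz)
  have := Complex.differentiableOn_update_limUnder_of_isLittleO
    (Metric.ball_mem_nhds (0:ℂ) Real.pi_pos) hd ho
  obtain ⟨H, hH⟩ := this.isExactOn_ball
  refine ⟨H, fun z hz => (hH z hz).differentiableAt, fun z hz h0 => ?_⟩
  have := hH z hz
  rwa [Function.update_of_ne h0] at this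

lemma im_const {H : ℂ → ℂ} (c : ℂ) (hc : ‖c‖ = 1)
    (h1 : ∀ z ∈ Metric.ball (0:ℂ) Real.pi, DifferentiableAt ℂ H z)
    (h2 : ∀ z ∈ Metric.ball (0:ℂ) Real.pi, z ≠ 0 → HasDerivAt H (auxK z) z)
    (h3 : ∀ t : ℝ, (auxK (c * t) * c).im = 0) :
    (H (c * (Real.pi / 2 : ℝ))).im = (H 0).im := by
  have hpi := Real.pi_pos
  have hmem : ∀ t ∈ Set.Icc 0 (Real.pi / 2), c * (t:ℂ) ∈ Metric.ball (0:ℂ) Real.pi := by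
    intro t ht
    rw [mem_ball_zero_iff, norm_mul, hc, Complex.norm_real, Real.norm_eq_abs, abs_of_nonneg ht.1]
    linarith [ht.2]
  have hcont : ContinuousOn (fun t : ℝ => (H (c * t)).im) (Set.Icc 0 (Real.pi / 2)) := by
    intro t ht
    apply ContinuousAt.continuousWithinAt
    have hc1 : ContinuousAt (fun t : ℝ => c * (t:ℂ)) t := by fun_prop
    have hc2 : ContinuousAt (fun t : ℝ => H (c * (t:ℂ))) t :=
      ContinuousAt.comp (f := fun t : ℝ => c * (t:ℂ)) (h1 _ (hmem t ht)).continuousAt hc1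
    exact Complex.continuous_im.continuousAt.comp hc2
  have hder : ∀ t ∈ Set.Ioo 0 (Real.pi / 2),
      HasDerivAt (fun t : ℝ => (H (c * t)).im) 0 t := by
    intro t ht
    have hne : c * (t:ℂ) ≠ 0 := by
      have : c ≠ 0 := by
        rintro rfl
        simp at hc
      have : (t:ℂ) ≠ 0 := by exact_mod_cast ht.1.ne'
      positivity
    have e1 : HasDerivAt (fun t : ℝ => c * (t:ℂ)) c t := by
      simpa using (Complex.ofRealCLM.hasDerivAt (x := t)).const_mul c
    have e2 : HasDerivAt (fun t : ℝ => H (c * (t:ℂ))) (auxK (c * t) * c) t :=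
      HasDerivAt.comp (h := fun t : ℝ => c * (t:ℂ)) t (h2 _ (hmem t ⟨ht.1.le, ht.2.le⟩) hne) e1
    have e3 := Complex.imCLM.hasFDerivAt.comp_hasDerivAt t e2
    have e4 := h3 t
    simp only [Complex.imCLM_apply, e4] at e3
    exact e3
  obtain ⟨t, -, ht⟩ := exists_hasDerivAt_eq_slope (fun t : ℝ => (H (c * t)).im) (fun _ => 0)
    (half_pos hpi) hcont hder
  simp only [sub_zero] at ht
  rw [eq_div_iff (half_pos hpi).ne'] at ht
  simp only [Complex.ofReal_zero, mul_zero, zero_mul] at ht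
  linarith

lemma real1 (t : ℝ) : (auxK (1 * t) * 1).im = 0 := by
  have : auxK (1 * t) * 1
      = ((1 / (t ^ 2 * Real.sin t) - 1 / t ^ 3 - 1 / (6 * t) : ℝ) : ℂ) := by
    simp [auxK]
  rw [this, Complex.ofReal_im]

lemma real2 (t : ℝ) : (auxK (-Complex.I * t) * (-Complex.I)).im = 0 := by
  have hs : Complex.sin (-Complex.I * t) = -(Complex.sinh t * Complex.I) := by
    rw [← Complex.sin_mul_I, ← Complex.sin_neg]; ring_nf
  have hI3 : Complex.I ^ 3 = -Complex.I := by
    rw [pow_succ, Complex.I_sq]; ring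
  have : auxK (-Complex.I * t) * (-Complex.I)
      = ((-1 / (t ^ 2 * Real.sinh t) + 1 / t ^ 3 - 1 / (6 * t) : ℝ) : ℂ) := by
    rw [auxK, hs]
    have a1 : (-Complex.I * t) ^ 2 * -(Complex.sinh t * Complex.I)
       = Complex.I * (t ^ 2 * Complex.sinh t) := by
      linear_combination (-(t:ℂ) ^ 2 * Complex.sinh t * Complex.I) * Complex.I_sq
    have a2 : (-Complex.I * (t:ℂ)) ^ 3 = Complex.I * t ^ 3 := by
      linear_combination (-(t:ℂ) ^ 3) * hI3
    have a3 : 6 * (-Complex.I * (t:ℂ)) = -Complex.I * (6 * t) := by ring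
    rw [a1, a2, a3]
    push_cast
    simp only [one_div, mul_inv, inv_neg, Complex.inv_I]
    ring_nf
    simp only [Complex.I_sq]
    ring
  rw [this, Complex.ofReal_im]

lemma denom_eq (v : ℝ) : Real.cosh (Real.pi * v) + Real.cos (Real.pi * v) =
    2 * ((Real.cos (Real.pi * v / 2) * Real.cosh (Real.pi * v / 2)) ^ 2 +
      (Real.sin (Real.pi * v / 2) * Real.sinh (Real.pi * v / 2)) ^ 2) := by
  have e : Real.pi * v = 2 * (Real.pi * v / 2) := by ring
  set a := Real.pi * v / 2
  rw [e, Real.cosh_two_mul, Real.cos_two_mul]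
  have h1 := Real.cosh_sq a
  have h2 := Real.sin_sq_add_cos_sq a
  have h3 : Real.sin a ^ 2 = 1 - Real.cos a ^ 2 := by linarith
  rw [mul_pow, mul_pow, h3, h1]
  ring

lemma denom_pos (v : ℝ) : 0 < Real.cosh (Real.pi * v) + Real.cos (Real.pi * v) := by
  rcases eq_or_ne (Real.pi * v) 0 with h | h
  · rw [h]; simp
  · have := Real.one_lt_cosh.mpr h
    linarith [Real.neg_one_le_cos (Real.pi * v)]

lemma integrand_eq (v : ℝ) (z : ℂ) (hz : z = (Real.pi / 2 : ℝ) * (1 - (1 + Complex.I) * v)) :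
    (Real.cos (Real.pi * v / 2) * Real.cosh (Real.pi * v / 2) * (2 * v ^ 2 - 1) -
          (2 * v ^ 2 - 4 * v + 1) * Real.sin (Real.pi * v / 2) * Real.sinh (Real.pi * v / 2)) /
          ((Real.cosh (Real.pi * v) + Real.cos (Real.pi * v)) * (2 * v ^ 2 - 2 * v + 1) ^ 2)
    = Real.pi / 4 *
      (1 / (z ^ 2 * Complex.sin z) * ((Real.pi / 2 : ℝ) * (-(1 + Complex.I)))).im := by
  have hpos := denom_pos v
  rw [denom_eq] at hpos ⊢
  have hs : Complex.sin z = (Real.cos (Real.pi * v / 2) * Real.cosh (Real.pi * v / 2) : ℝ)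
      - (Real.sin (Real.pi * v / 2) * Real.sinh (Real.pi * v / 2) : ℝ) * Complex.I := by
    have : z = Real.pi / 2 - (((Real.pi * v / 2 : ℝ) : ℂ) + (Real.pi * v / 2 : ℝ) * Complex.I) := by
      rw [hz]; push_cast; ring
    rw [this, Complex.sin_pi_div_two_sub, Complex.cos_add_mul_I]
    simp only [Complex.ofReal_mul, Complex.ofReal_cos, Complex.ofReal_cosh, Complex.ofReal_sin,
      Complex.ofReal_sinh]
  have hz2 : z ^ 2 = (Real.pi ^ 2 / 4 : ℝ) * ((1 - 2 * v : ℝ) - (2 * v - 2 * v ^ 2 : ℝ) * Complex.I) := by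
    rw [hz]; push_cast
    linear_combination ((Real.pi:ℂ) ^ 2 / 4 * v ^ 2) * Complex.I_sq
  rw [mul_assoc (2 * v ^ 2 - 4 * v + 1)]
  set C := Real.cos (Real.pi * v / 2) * Real.cosh (Real.pi * v / 2)
  set S := Real.sin (Real.pi * v / 2) * Real.sinh (Real.pi * v / 2)
  have hq : 0 < 2 * v ^ 2 - 2 * v + 1 := by nlinarith [sq_nonneg (v - 1), sq_nonneg v]
  have hpi := Real.pi_pos
  have hprod : z ^ 2 * Complex.sin z = (Real.pi ^ 2 / 4 : ℝ) *
      (⟨(1 - 2 * v) * C - (2 * v - 2 * v ^ 2) * S,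
        -((1 - 2 * v) * S + (2 * v - 2 * v ^ 2) * C)⟩ : ℂ) := by
    rw [hz2, hs, mul_assoc]
    congr 1
    apply Complex.ext <;> simp only [Complex.mul_re, Complex.mul_im, Complex.sub_re,
      Complex.sub_im, Complex.ofReal_re, Complex.ofReal_im, Complex.I_re, Complex.I_im] <;> ring
  have hcalc : 1 / (z ^ 2 * Complex.sin z) * ((Real.pi / 2 : ℝ) * (-(1 + Complex.I)))
      = (2 / Real.pi : ℝ) * ((⟨(1 - 2 * v) * C - (2 * v - 2 * v ^ 2) * S,
        -((1 - 2 * v) * S + (2 * v - 2 * v ^ 2) * C)⟩ : ℂ)⁻¹ * (-(1 + Complex.I))) := by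
    rw [hprod, one_div, mul_inv]
    have : (Real.pi : ℂ) ≠ 0 := by exact_mod_cast hpi.ne'
    push_cast
    field_simp
    norm_num
  have hns : ((1 - 2 * v) * C - (2 * v - 2 * v ^ 2) * S) * ((1 - 2 * v) * C - (2 * v - 2 * v ^ 2) * S)
      + -((1 - 2 * v) * S + (2 * v - 2 * v ^ 2) * C) * -((1 - 2 * v) * S + (2 * v - 2 * v ^ 2) * C)
      = (C ^ 2 + S ^ 2) * (2 * v ^ 2 - 2 * v + 1) ^ 2 := by ring
  have hCS : 0 < C ^ 2 + S ^ 2 := by linarith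
  rw [hcalc, Complex.im_ofReal_mul, Complex.mul_im, Complex.inv_re, Complex.inv_im,
    Complex.normSq_mk, hns]
  simp only [Complex.neg_re, Complex.neg_im, Complex.add_re, Complex.add_im, Complex.one_re,
    Complex.one_im, Complex.I_re, Complex.I_im]
  field_simp
  ring

/-- `∫₀¹ [cos(πv/2) cosh(πv/2)(2v²-1) - (2v²-4v+1) sin(πv/2) sinh(πv/2)]
   / [(cosh(πv) + cos(πv))(2v²-2v+1)²] dv = -π²/48`. -/
theorem stmt_16 :
    ∫ v in (0:ℝ)..1,
        (Real.cos (Real.pi * v / 2) * Real.cosh (Real.pi * v / 2) * (2 * v ^ 2 - 1) -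
          (2 * v ^ 2 - 4 * v + 1) * Real.sin (Real.pi * v / 2) * Real.sinh (Real.pi * v / 2)) /
          ((Real.cosh (Real.pi * v) + Real.cos (Real.pi * v)) * (2 * v ^ 2 - 2 * v + 1) ^ 2)
      = -(Real.pi ^ 2) / 48 := by
  have hpi := Real.pi_pos
  obtain ⟨H, h1, h2⟩ := exists_prim
  have i1 := im_const 1 (by simp) h1 h2 real1
  have i2 := im_const (-Complex.I) (by simp) h1 h2 real2
  let Z : ℝ → ℂ := fun v => (Real.pi / 2 : ℝ) * (1 - (1 + Complex.I) * v)
  let G : ℂ → ℂ := fun z => H z - 1 / (2 * z ^ 2) + Complex.log z / 6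
  have hZre : ∀ v, (Z v).re = Real.pi / 2 * (1 - v) := by intro v; simp [Z]
  have hZim : ∀ v, (Z v).im = -(Real.pi / 2 * v) := by intro v; simp [Z]
  have hder : ∀ v ∈ Set.uIcc (0:ℝ) 1, HasDerivAt (fun v => Real.pi / 4 * (G (Z v)).im)
      ((Real.cos (Real.pi * v / 2) * Real.cosh (Real.pi * v / 2) * (2 * v ^ 2 - 1) -
          (2 * v ^ 2 - 4 * v + 1) * Real.sin (Real.pi * v / 2) * Real.sinh (Real.pi * v / 2)) /
          ((Real.cosh (Real.pi * v) + Real.cos (Real.pi * v)) * (2 * v ^ 2 - 2 * v + 1) ^ 2)) v := by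
    intro v hv
    rw [Set.uIcc_of_le zero_le_one] at hv
    have hslit : Z v ∈ Complex.slitPlane := by
      rw [Complex.mem_slitPlane_iff, hZre, hZim]
      rcases hv.2.lt_or_eq with h | h
      · left
        have : 0 < 1 - v := by linarith
        positivity
      · right
        rw [h]
        simp [hpi.ne']
    have hne : Z v ≠ 0 := Complex.slitPlane_ne_zero hslit
    have hball : Z v ∈ Metric.ball (0:ℂ) Real.pi := by
      rw [mem_ball_zero_iff]
      apply lt_of_pow_lt_pow_left₀ 2 hpi.le
      rw [← Complex.normSq_eq_norm_sq, Complex.normSq_apply, hZre, hZim]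
      have : (1 - v) * (1 - v) + v * v ≤ 1 := by nlinarith [hv.1, hv.2]
      nlinarith [mul_pos hpi hpi]
    have hZ' : HasDerivAt Z ((Real.pi / 2 : ℝ) * (-(1 + Complex.I))) v := by
      have := (((Complex.ofRealCLM.hasDerivAt (x := v)).const_mul (1 + Complex.I)).const_sub
        1).const_mul ((Real.pi / 2 : ℝ) : ℂ)
      simpa [Z] using this
    have hsin := sin_ne_aux hball hne
    have hG : HasDerivAt G (1 / ((Z v) ^ 2 * Complex.sin (Z v))) (Z v) := by
      have a1 := h2 _ hball hne
      have a2 : HasDerivAt (fun z : ℂ => 1 / (2 * z ^ 2)) (-1 / (Z v) ^ 3) (Z v) := by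
        have b := ((hasDerivAt_pow 2 (Z v)).const_mul 2).inv
          (mul_ne_zero two_ne_zero (pow_ne_zero 2 hne))
        simp only [one_div]
        refine b.congr_deriv ?_
        field_simp
        norm_num
      have a3 := (Complex.hasDerivAt_log hslit).div_const 6
      refine ((a1.sub a2).add a3).congr_deriv ?_
      rw [auxK]
      field_simp
      ring
    rw [integrand_eq v (Z v) rfl]
    have e2 := HasDerivAt.comp v hG hZ'
    have e3 := Complex.imCLM.hasFDerivAt.comp_hasDerivAt v e2
    exact e3.const_mul (Real.pi / 4)
  rw [intervalIntegral.integral_eq_sub_of_hasDerivAt hder]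
  · have z1 : Z 1 = -Complex.I * (Real.pi / 2 : ℝ) := by simp [Z]; ring
    have z0 : Z 0 = 1 * (Real.pi / 2 : ℝ) := by simp [Z]
    have l1 : (Complex.log (-Complex.I * (Real.pi / 2 : ℝ))).im = -(Real.pi / 2) := by
      rw [mul_comm, Complex.log_ofReal_mul (half_pos hpi) (by simp), Complex.log_neg_I]
      simp
    have l0 : (Complex.log (1 * (Real.pi / 2 : ℝ))).im = 0 := by
      rw [one_mul, ← Complex.ofReal_log (half_pos hpi).le, Complex.ofReal_im]
    have q1 : (1 / (2 * (-Complex.I * (Real.pi / 2 : ℝ)) ^ 2)).im = 0 := by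
      have : 1 / (2 * (-Complex.I * (Real.pi / 2 : ℝ)) ^ 2)
          = ((1 / (-(2 * (Real.pi / 2) ^ 2)) : ℝ) : ℂ) := by
        rw [mul_pow, neg_sq, Complex.I_sq]
        push_cast
        ring_nf
      rw [this, Complex.ofReal_im]
    have q0 : (1 / (2 * (1 * ((Real.pi / 2 : ℝ):ℂ)) ^ 2)).im = 0 := by
      have : 1 / (2 * (1 * ((Real.pi / 2 : ℝ):ℂ)) ^ 2)
          = ((1 / (2 * (Real.pi / 2) ^ 2) : ℝ) : ℂ) := by
        push_cast
        ring_nf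
      rw [this, Complex.ofReal_im]
    have d6 : ∀ w : ℂ, (w / 6).im = w.im / 6 := fun w => by
      simpa using Complex.div_ofReal_im w 6
    have g1 : (G (Z 1)).im = (H 0).im - Real.pi / 2 / 6 := by
      simp only [G]
      rw [Complex.add_im, Complex.sub_im, d6, z1, q1, l1, i2]
      ring
    have g0 : (G (Z 0)).im = (H 0).im := by
      simp only [G]
      rw [Complex.add_im, Complex.sub_im, d6, z0, q0, l0, i1]
      ring
    rw [g1, g0]
    ring
  · apply Continuous.intervalIntegrable
    apply Continuous.div
    · fun_prop
    · fun_prop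
    · intro v
      have := denom_pos v
      have hq : 0 < 2 * v ^ 2 - 2 * v + 1 := by nlinarith [sq_nonneg (v - 1), sq_nonneg v]
      positivity
end

section
/- The improper integral ∫₀^∞ (1/(v sinh(πv/2)) − 2/(π v²)) dv converges and equals −ln 2. -/
open MeasureTheory

open Filter Topology in
lemma aux_log_two :
    HasSum (fun k : ℕ => 1 / (2 * (k:ℝ) + 1) - 1 / (2 * (k:ℝ) + 2)) (Real.log 2) := by
  rw [hasSum_iff_tendsto_nat_of_nonneg]
  · have h1 := Real.tendsto_harmonic_sub_log
    have h2 := h1.comp (tendsto_id.const_mul_atTop' (two_pos : (0:ℕ) < 2))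
    have h3 := (h2.sub h1).add_const (Real.log 2)
    rw [sub_self, zero_add] at h3
    refine h3.congr' ?_
    filter_upwards [eventually_gt_atTop 0] with n hn
    have hn' : (n:ℝ) ≠ 0 := by positivity
    have key : ∀ m : ℕ, ∑ k ∈ Finset.range m, (1 / (2 * (k:ℝ) + 1) - 1 / (2 * (k:ℝ) + 2))
        = (harmonic (2 * m) : ℝ) - harmonic m := by
      intro m
      induction m with
      | zero => simp
      | succ m ih =>
        rw [Finset.sum_range_succ, ih, show 2 * (m + 1) = 2 * m + 1 + 1 by ring,
          harmonic_succ, harmonic_succ, harmonic_succ]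
        push_cast
        field_simp
        ring
    rw [key]
    simp only [Function.comp, id, Nat.cast_mul, Nat.cast_ofNat]
    rw [Real.log_mul two_ne_zero hn']
    ring
  · intro k
    rw [sub_nonneg]
    gcongr
    norm_num

lemma aux_coth (w : ℝ) (hw : 0 < w) :
    HasSum (fun n : ℕ => 2 * w / (w ^ 2 + ((n:ℝ) + 1) ^ 2))
      (Real.pi * (Real.cosh (Real.pi * w) / Real.sinh (Real.pi * w)) - 1 / w) := by
  have hz : (w * Complex.I) ∈ Complex.integerComplement := by
    rw [Complex.mem_integerComplement_iff]
    rintro ⟨n, hn⟩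
    have := congrArg Complex.im hn
    simp at this
    exact hw.ne this
  have h := (summable_cotTerm hz).hasSum
  have e : ∑' n, cotTerm (w * Complex.I) n = _ := (cot_series_rep' hz).symm
  rw [e] at h
  have h2 := h.mul_left Complex.I
  rw [← Complex.hasSum_ofReal]
  have hs : Real.sinh (Real.pi * w) ≠ 0 := (Real.sinh_pos_iff.2 (by positivity)).ne'
  have hs' : Complex.sinh (Real.pi * w) ≠ 0 := by exact_mod_cast hs
  have hw' : (w:ℂ) ≠ 0 := by exact_mod_cast hw.ne'
  have e1 : (fun n : ℕ => ((2 * w / (w ^ 2 + ((n:ℝ) + 1) ^ 2) : ℝ) : ℂ))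
      = fun n => Complex.I * cotTerm (w * Complex.I) n := by
    funext n
    rw [cotTerm_identity hz]
    have h0 : (w:ℝ) ^ 2 + ((n:ℝ) + 1) ^ 2 ≠ 0 := by positivity
    have h0' : (w:ℂ) ^ 2 + ((n:ℂ) + 1) ^ 2 ≠ 0 := by exact_mod_cast h0
    have : (w * Complex.I + ((n:ℂ) + 1)) * (w * Complex.I - ((n:ℂ) + 1))
        = -((w:ℂ) ^ 2 + ((n:ℂ) + 1) ^ 2) := by
      linear_combination (w:ℂ) ^ 2 * Complex.I_sq
    rw [this]
    push_cast
    rw [one_div, inv_neg, div_eq_mul_inv]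
    linear_combination 2 * w * ((w:ℂ) ^ 2 + ((n:ℂ) + 1) ^ 2)⁻¹ * Complex.I_sq
  have e2 : ((Real.pi * (Real.cosh (Real.pi * w) / Real.sinh (Real.pi * w)) - 1 / w : ℝ) : ℂ)
      = Complex.I * (Real.pi * Complex.cot (Real.pi * (w * Complex.I)) - 1 / (w * Complex.I)) := by
    push_cast
    rw [Complex.cot, ← mul_assoc, Complex.cos_mul_I, Complex.sin_mul_I]
    have := Complex.I_ne_zero
    field_simp
  rw [e2]
  exact e1 ▸ h2

lemma aux_e1 (v : ℝ) (hv : 0 < v) : ∀ k : ℕ, 4 / Real.pi *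
      (((2 * (2 * (k:ℝ) + 2)) ^ 2 + v ^ 2)⁻¹ - ((2 * (2 * (k:ℝ) + 1)) ^ 2 + v ^ 2)⁻¹)
    = 1 / (Real.pi * v) * (2 * (v / 4) / ((v / 4) ^ 2 + ((k:ℝ) + 1) ^ 2)
      - (2 * (v / 2) / ((v / 2) ^ 2 + (((2 * k : ℕ) : ℝ) + 1) ^ 2)
        + 2 * (v / 2) / ((v / 2) ^ 2 + (((2 * k + 1 : ℕ) : ℝ) + 1) ^ 2))) := by
  have hp := Real.pi_pos
  intro k
  push_cast
  have a1 : 2 * (v / 4) / ((v / 4) ^ 2 + ((k:ℝ) + 1) ^ 2)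
      = 8 * v * ((2 * (2 * (k:ℝ) + 2)) ^ 2 + v ^ 2)⁻¹ := by
    rw [← div_eq_mul_inv, div_eq_div_iff (by positivity) (by positivity)]
    ring
  have a2 : 2 * (v / 2) / ((v / 2) ^ 2 + (2 * (k:ℝ) + 1) ^ 2)
      = 4 * v * ((2 * (2 * (k:ℝ) + 1)) ^ 2 + v ^ 2)⁻¹ := by
    rw [← div_eq_mul_inv, div_eq_div_iff (by positivity) (by positivity)]
    ring
  have a3 : 2 * (v / 2) / ((v / 2) ^ 2 + (2 * (k:ℝ) + 1 + 1) ^ 2)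
      = 4 * v * ((2 * (2 * (k:ℝ) + 2)) ^ 2 + v ^ 2)⁻¹ := by
    rw [← div_eq_mul_inv, div_eq_div_iff (by positivity) (by positivity)]
    ring
  rw [a1, a2, a3]
  generalize ((2 * (2 * (k:ℝ) + 2)) ^ 2 + v ^ 2)⁻¹ = A
  generalize ((2 * (2 * (k:ℝ) + 1)) ^ 2 + v ^ 2)⁻¹ = B
  field_simp
  ring

lemma aux_e2 (v : ℝ) (hv : 0 < v) : 1 / (v * Real.sinh (Real.pi * v / 2)) - 2 / (Real.pi * v ^ 2)
    = 1 / (Real.pi * v) * (Real.pi * (Real.cosh (Real.pi * (v / 4)) /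
      Real.sinh (Real.pi * (v / 4))) - 1 / (v / 4) - (Real.pi * (Real.cosh (Real.pi * (v / 2)) /
      Real.sinh (Real.pi * (v / 2))) - 1 / (v / 2))) := by
  have hp := Real.pi_pos
  have hs : 0 < Real.sinh (Real.pi * v / 4) := Real.sinh_pos_iff.2 (by positivity)
  have hc := Real.cosh_pos (Real.pi * v / 4)
  rw [show Real.pi * (v / 4) = Real.pi * v / 4 by ring,
    show Real.pi * (v / 2) = 2 * (Real.pi * v / 4) by ring,
    show Real.pi * v / 2 = 2 * (Real.pi * v / 4) by ring, Real.sinh_two_mul, Real.cosh_two_mul]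
  have hcs := Real.cosh_sq (Real.pi * v / 4)
  generalize Real.sinh (Real.pi * v / 4) = s at *
  generalize Real.cosh (Real.pi * v / 4) = c at *
  have b1 : c / s - (c ^ 2 + s ^ 2) / (2 * s * c) = 1 / (2 * s * c) := by
    field_simp
    linear_combination hcs
  have b2 : 1 / (v * (2 * s * c)) = 1 / v * (1 / (2 * s * c)) := by
    rw [one_div_mul_one_div]
  rw [b2, ← b1]
  generalize c / s = x
  generalize (c ^ 2 + s ^ 2) / (2 * s * c) = y
  field_simp
  ring

lemma aux_split (f : ℕ → ℝ) (S : ℝ) (h : HasSum f S) :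
    HasSum (fun k => f (2 * k) + f (2 * k + 1)) S := by
  have he : Summable (fun k => f (2 * k)) :=
    h.summable.comp_injective (i := fun k : ℕ => 2 * k) (fun a b h => by dsimp at h; omega)
  have ho : Summable (fun k => f (2 * k + 1)) :=
    h.summable.comp_injective (i := fun k : ℕ => 2 * k + 1) (fun a b h => by dsimp at h; omega)
  have hu := (HasSum.even_add_odd he.hasSum ho.hasSum).unique h
  rw [← hu]
  exact he.hasSum.add ho.hasSum

lemma aux_series (v : ℝ) (hv : 0 < v) :
    HasSum (fun k : ℕ => 4 / Real.pi *
        (((2 * (2 * (k:ℝ) + 2)) ^ 2 + v ^ 2)⁻¹ - ((2 * (2 * (k:ℝ) + 1)) ^ 2 + v ^ 2)⁻¹))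
      (1 / (v * Real.sinh (Real.pi * v / 2)) - 2 / (Real.pi * v ^ 2)) := by
  have h1 := aux_coth (v / 4) (by positivity)
  have h2 := aux_coth (v / 2) (by positivity)
  have h3 := (h1.sub (aux_split _ _ h2)).mul_left (1 / (Real.pi * v))
  rw [aux_e2 v hv]
  rw [funext (aux_e1 v hv)]
  exact h3

lemma aux_int (a : ℝ) (ha : 0 < a) :
    IntegrableOn (fun v : ℝ => (a ^ 2 + v ^ 2)⁻¹) (Set.Ioi 0) ∧
    ∫ v in Set.Ioi (0:ℝ), (a ^ 2 + v ^ 2)⁻¹ = Real.pi / (2 * a) := by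
  have e : (fun v : ℝ => (a ^ 2 + v ^ 2)⁻¹) =
      fun v => (a ^ 2)⁻¹ * (fun x : ℝ => (1 + x ^ 2)⁻¹) (a⁻¹ * v) := by
    funext v
    simp only
    field_simp
  have ha' : 0 < a⁻¹ := by positivity
  rw [e]
  constructor
  · apply Integrable.const_mul
    apply (integrableOn_Ioi_comp_mul_left_iff (fun x : ℝ => (1 + x ^ 2)⁻¹) 0 ha').2
    exact integrable_inv_one_add_sq.integrableOn
  · rw [integral_const_mul, integral_comp_mul_left_Ioi (fun x : ℝ => (1 + x ^ 2)⁻¹) _ ha']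
    simp
    field_simp

/-- The improper integral `∫₀^∞ (1/(v sinh(πv/2)) - 2/(πv²)) dv` converges
and equals `-ln 2`. -/
theorem stmt_17 :
    IntegrableOn (fun v : ℝ => 1 / (v * Real.sinh (Real.pi * v / 2)) - 2 / (Real.pi * v ^ 2))
      (Set.Ioi 0) ∧
    ∫ v in Set.Ioi (0:ℝ),
        (1 / (v * Real.sinh (Real.pi * v / 2)) - 2 / (Real.pi * v ^ 2))
      = -Real.log 2 := by
  have hp := Real.pi_pos
  let F : ℕ → ℝ → ℝ := fun k v => 4 / Real.pi *
        (((2 * (2 * (k:ℝ) + 2)) ^ 2 + v ^ 2)⁻¹ - ((2 * (2 * (k:ℝ) + 1)) ^ 2 + v ^ 2)⁻¹)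
  have hF_int : ∀ k, Integrable (F k) (volume.restrict (Set.Ioi 0)) := fun k =>
    (((aux_int (2 * (2 * (k:ℝ) + 2)) (by positivity)).1).sub
      ((aux_int (2 * (2 * (k:ℝ) + 1)) (by positivity)).1)).const_mul _
  have hF_val : ∀ k, ∫ v in Set.Ioi (0:ℝ), F k v
      = -(1 / (2 * (k:ℝ) + 1) - 1 / (2 * (k:ℝ) + 2)) := by
    intro k
    have h1 := aux_int (2 * (2 * (k:ℝ) + 2)) (by positivity)
    have h2 := aux_int (2 * (2 * (k:ℝ) + 1)) (by positivity)
    simp only [F]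
    rw [integral_const_mul, integral_sub h1.1 h2.1, h1.2, h2.2]
    field_simp
    ring
  have hF_norm : ∀ k v, ‖F k v‖ = -F k v := by
    intro k v
    rw [Real.norm_of_nonpos]
    apply mul_nonpos_of_nonneg_of_nonpos (by positivity)
    rw [sub_nonpos]
    gcongr
    norm_num
  have hsum : Summable fun k => ∫ v in Set.Ioi (0:ℝ), ‖F k v‖ := by
    simp only [hF_norm, integral_neg, hF_val, neg_neg]
    exact aux_log_two.summable
  have h := hasSum_integral_of_summable_integral_norm hF_int hsum
  simp only [hF_val] at h
  have hval := h.unique aux_log_two.neg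
  have hcongr : ∫ v in Set.Ioi (0:ℝ),
        (1 / (v * Real.sinh (Real.pi * v / 2)) - 2 / (Real.pi * v ^ 2))
      = -Real.log 2 := by
    rw [← hval]
    exact setIntegral_congr_fun measurableSet_Ioi fun v hv => (aux_series v hv).tsum_eq.symm
  refine ⟨?_, hcongr⟩
  by_contra hn
  rw [integral_undef hn] at hcongr
  have := Real.log_pos one_lt_two
  linarith
end

section
/- For all integers p ≥ 1 and k ≥ 0, (−1)^p Γ(2p) [E_{2p}(−iπ(k+1/2)) + E_{2p}(iπ(k+1/2))] / (π(k+1/2))^{2p−1} = 2(−1)^k ∑_{j=1}^{p−1} (−1)^j Γ(2j)/(π(k+1/2))^{2j} − 2(Si(π(k+1/2)) − π/2), where the finite sum is empty when p = 1. -/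
open MeasureTheory

/-- The generalized exponential integral `E_s(z) = ∫₁^∞ v^{-s} e^{-z v} dv`. -/
noncomputable def expInt (s z : ℂ) : ℂ :=
  ∫ v in Set.Ioi (1 : ℝ), (v : ℂ) ^ (-s) * Complex.exp (-z * v)

/-- The sine integral `Si(x) = ∫₀^x (sin t)/t dt`. -/
noncomputable def Si (x : ℝ) : ℝ := ∫ t in (0:ℝ)..x, Real.sin t / t

open Filter Topology in
lemma aux_f_tendsto : Tendsto (fun x : ℝ => ∫ θ in (0:ℝ)..(Real.pi/2),
    Real.exp (-(x * Real.cos θ)) * Real.cos (x * Real.sin θ)) atTop (𝓝 0) := by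
  have h0 : (0:ℝ) = ∫ θ in (0:ℝ)..(Real.pi/2), (0:ℝ) := by simp
  rw [show 𝓝 (0:ℝ) = 𝓝 (∫ θ in (0:ℝ)..(Real.pi/2), (0:ℝ)) by rw [← h0]]
  apply intervalIntegral.tendsto_integral_filter_of_dominated_convergence (fun _ => (1:ℝ))
  · refine Eventually.of_forall fun x => ?_
    apply Continuous.aestronglyMeasurable
    fun_prop
  · filter_upwards [eventually_ge_atTop (0:ℝ)] with x hx
    refine Eventually.of_forall fun θ hθ => ?_
    rw [Set.uIoc_of_le (by positivity)] at hθ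
    have hc : 0 ≤ Real.cos θ := Real.cos_nonneg_of_mem_Icc ⟨by linarith [hθ.1, Real.pi_pos], hθ.2⟩
    rw [norm_mul, Real.norm_eq_abs, Real.norm_eq_abs, Real.abs_exp]
    have h1 : Real.exp (-(x * Real.cos θ)) ≤ 1 := by
      rw [Real.exp_le_one_iff]; nlinarith
    have h2 := Real.abs_cos_le_one (x * Real.sin θ)
    have := Real.exp_pos (-(x * Real.cos θ))
    calc _ ≤ (1:ℝ) * 1 := by gcongr
      _ = 1 := by ring
  · exact intervalIntegrable_const
  · have hne : ∀ᵐ θ : ℝ, θ ≠ Real.pi/2 := by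
      simp [ae_iff, measure_singleton]
    filter_upwards [hne] with θ hne hθ
    rw [Set.uIoc_of_le (by positivity)] at hθ
    have hc : 0 < Real.cos θ := Real.cos_pos_of_mem_Ioo
      ⟨by linarith [hθ.1, Real.pi_pos], lt_of_le_of_ne hθ.2 hne⟩
    have ht : Tendsto (fun x : ℝ => Real.exp (-(x * Real.cos θ))) atTop (𝓝 0) :=
      Real.tendsto_exp_neg_atTop_nhds_zero.comp (tendsto_id.atTop_mul_const hc)
    apply squeeze_zero_norm (fun x => ?_) ht
    rw [norm_mul, Real.norm_eq_abs, Real.norm_eq_abs, Real.abs_exp]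
    exact mul_le_of_le_one_right (Real.exp_pos _).le (Real.abs_cos_le_one _)

lemma aux_f_deriv (x : ℝ) : HasDerivAt (fun x : ℝ => ∫ θ in (0:ℝ)..(Real.pi/2),
    Real.exp (-(x * Real.cos θ)) * Real.cos (x * Real.sin θ)) (-Real.sinc x) x := by
  have key := (intervalIntegral.hasDerivAt_integral_of_dominated_loc_of_deriv_le
    (μ := volume) (a := 0) (b := Real.pi/2) (x₀ := x) (s := Metric.ball x 1)
    (F := fun x θ => Real.exp (-(x * Real.cos θ)) * Real.cos (x * Real.sin θ))
    (F' := fun x θ => Real.exp (-(x * Real.cos θ)) * (-(1 * Real.cos θ)) * Real.cos (x * Real.sin θ)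
      + Real.exp (-(x * Real.cos θ)) * (-Real.sin (x * Real.sin θ) * (1 * Real.sin θ)))
    (bound := fun _ => 2 * Real.exp (|x| + 1))
    (Metric.ball_mem_nhds x one_pos)
    (Filter.Eventually.of_forall fun y => Continuous.aestronglyMeasurable (by fun_prop))
    (Continuous.intervalIntegrable (by fun_prop) _ _)
    (Continuous.aestronglyMeasurable (by fun_prop))
    (Filter.Eventually.of_forall fun θ _ y hy => ?_)
    intervalIntegrable_const
    (Filter.Eventually.of_forall fun θ _ y _ => ?_)).2
  · refine key.congr_deriv ?_
    symm
    rcases eq_or_ne x 0 with rfl | hx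
    · simp
    · rw [Real.sinc_of_ne_zero hx]
      have hG : ∀ θ ∈ Set.uIcc 0 (Real.pi/2), HasDerivAt
          (fun θ => -(Real.exp (-(x * Real.cos θ)) * Real.sin (x * Real.sin θ)) / x)
          (Real.exp (-(x * Real.cos θ)) * (-(1 * Real.cos θ)) * Real.cos (x * Real.sin θ)
      + Real.exp (-(x * Real.cos θ)) * (-Real.sin (x * Real.sin θ) * (1 * Real.sin θ))) θ := by
        intro θ _
        have h1 := (((Real.hasDerivAt_cos θ).const_mul x).neg).exp
        have h2 := ((Real.hasDerivAt_sin θ).const_mul x).sin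
        have h3 := ((h1.mul h2).neg).div_const x
        refine h3.congr_deriv ?_
        symm
        simp only [Pi.neg_apply]
        field_simp
        ring
      rw [intervalIntegral.integral_eq_sub_of_hasDerivAt hG
        (Continuous.intervalIntegrable (by fun_prop) _ _)]
      simp
      ring
  · have hy' : |y| ≤ |x| + 1 := by
      rw [Metric.mem_ball, Real.dist_eq] at hy
      have := abs_sub_abs_le_abs_sub y x
      linarith
    have hE : Real.exp (-(y * Real.cos θ)) ≤ Real.exp (|x| + 1) := by
      apply Real.exp_le_exp.mpr
      calc -(y * Real.cos θ) ≤ |y * Real.cos θ| := neg_le_abs _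
        _ = |y| * |Real.cos θ| := abs_mul _ _
        _ ≤ |y| := mul_le_of_le_one_right (abs_nonneg _) (Real.abs_cos_le_one _)
        _ ≤ _ := hy'
    have a1 : |(-(1 * Real.cos θ)) * Real.cos (y * Real.sin θ)| ≤ 1 := by
      rw [abs_mul, abs_neg, one_mul]
      exact mul_le_one₀ (Real.abs_cos_le_one _) (abs_nonneg _) (Real.abs_cos_le_one _)
    have a2 : |-Real.sin (y * Real.sin θ) * (1 * Real.sin θ)| ≤ 1 := by
      rw [abs_mul, abs_neg, one_mul]
      exact mul_le_one₀ (Real.abs_sin_le_one _) (abs_nonneg _) (Real.abs_sin_le_one _)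
    rw [mul_assoc, ← mul_add, Real.norm_eq_abs, abs_mul, Real.abs_exp, mul_comm 2]
    have a3 : |(-(1 * Real.cos θ)) * Real.cos (y * Real.sin θ) + -Real.sin (y * Real.sin θ) * (1 * Real.sin θ)| ≤ 2 :=
      (abs_add_le _ _).trans (by linarith)
    gcongr
  · have h1 := ((((hasDerivAt_id y).mul_const (Real.cos θ))).neg).exp
    have h2 := ((hasDerivAt_id y).mul_const (Real.sin θ)).cos
    exact h1.mul h2

lemma Si_eq (x : ℝ) : Si x = ∫ t in (0:ℝ)..x, Real.sinc t := by
  unfold Si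
  apply intervalIntegral.integral_congr_ae
  have hne : ∀ᵐ θ : ℝ, θ ≠ 0 := by simp [ae_iff, measure_singleton]
  filter_upwards [hne] with t ht _
  rw [Real.sinc_of_ne_zero ht]

lemma Si_deriv (x : ℝ) : HasDerivAt Si (Real.sinc x) x := by
  have : Si = fun x => ∫ t in (0:ℝ)..x, Real.sinc t := funext Si_eq
  rw [this]
  exact Real.continuous_sinc.integral_hasStrictDerivAt 0 x |>.hasDerivAt

open Filter Topology in
lemma Si_tendsto : Tendsto Si atTop (𝓝 (Real.pi/2)) := by
  have hd : ∀ x, HasDerivAt (fun x => Si x + ∫ θ in (0:ℝ)..(Real.pi/2),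
      Real.exp (-(x * Real.cos θ)) * Real.cos (x * Real.sin θ)) 0 x := by
    intro x
    have := (Si_deriv x).add (aux_f_deriv x)
    rw [add_neg_cancel] at this
    exact this
  have hc : ∀ x, Si x = Real.pi/2 - ∫ θ in (0:ℝ)..(Real.pi/2),
      Real.exp (-(x * Real.cos θ)) * Real.cos (x * Real.sin θ) := by
    intro x
    have := is_const_of_deriv_eq_zero (fun x => (hd x).differentiableAt) (fun x => (hd x).deriv) x 0
    have h0 : Si 0 = 0 := by simp [Si]
    simp [h0] at this
    linarith
  rw [show Si = _ from funext hc]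
  simpa using (tendsto_const_nhds (x := Real.pi/2)).sub aux_f_tendsto

/-- Real cosine integral. -/
noncomputable def CC (n : ℕ) (x : ℝ) : ℝ := ∫ v in Set.Ioi (1:ℝ), Real.cos (x * v) / v ^ n

lemma pow_int (n : ℕ) (hn : 2 ≤ n) : IntegrableOn (fun v : ℝ => (v ^ n)⁻¹) (Set.Ioi 1) := by
  have hn' : (2:ℝ) ≤ n := by exact_mod_cast hn
  have := integrableOn_Ioi_rpow_of_lt (a := -(n:ℝ)) (by linarith) one_pos
  refine this.congr_fun (fun v hv => ?_) measurableSet_Ioi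
  have hv : (1:ℝ) < v := hv
  simp only
  rw [Real.rpow_neg (by linarith), Real.rpow_natCast]

lemma CC_int (n : ℕ) (hn : 2 ≤ n) (x : ℝ) :
    IntegrableOn (fun v : ℝ => Real.cos (x * v) / v ^ n) (Set.Ioi 1) := by
  refine (pow_int n hn).mono' (Measurable.aestronglyMeasurable (by fun_prop)) ?_
  refine (ae_restrict_iff' measurableSet_Ioi).2 (Filter.Eventually.of_forall fun v hv => ?_)
  have hv : (1:ℝ) < v := hv
  have : 0 < v ^ n := by positivity
  rw [norm_div, Real.norm_eq_abs, Real.norm_of_nonneg this.le, div_eq_mul_inv]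
  exact mul_le_of_le_one_left (by positivity) (Real.abs_cos_le_one _)

open Filter Topology in
lemma bdd_div_tendsto (g : ℝ → ℝ) (hg : ∀ v, |g v| ≤ 1) (n : ℕ) (hn : n ≠ 0) :
    Tendsto (fun v : ℝ => g v / v ^ n) atTop (𝓝 0) := by
  have ht : Tendsto (fun v : ℝ => (v ^ n)⁻¹) atTop (𝓝 0) :=
    (tendsto_pow_atTop hn).inv_tendsto_atTop
  apply squeeze_zero_norm' ?_ ht
  filter_upwards [eventually_gt_atTop 0] with v hv
  have : 0 < v ^ n := by positivity
  rw [norm_div, Real.norm_eq_abs, Real.norm_of_nonneg this.le, div_eq_mul_inv]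
  exact mul_le_of_le_one_left (by positivity) (hg _)

lemma CC_base (x : ℝ) (hx : 0 < x) : CC 2 x = Real.cos x + x * Si x - x * (Real.pi / 2) := by
  unfold CC
  have hl : Filter.Tendsto (fun v : ℝ => -(Real.cos (x * v) / v ^ 1) - x * Si (x * v)) Filter.atTop
      (nhds (-0 - x * (Real.pi/2))) := by
    refine ((bdd_div_tendsto _ (fun v => Real.abs_cos_le_one (x * v)) 1 one_ne_zero).neg).sub
      (Filter.Tendsto.const_mul x ?_)
    exact Si_tendsto.comp (Filter.tendsto_id.const_mul_atTop hx)
  rw [integral_Ioi_of_hasDerivAt_of_tendsto' (fun v hv => ?_) (CC_int 2 le_rfl x) hl]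
  · simp; ring
  · have hv : (1:ℝ) ≤ v := hv
    have hv0 : v ≠ 0 := by linarith
    have hm : HasDerivAt (fun v => x * v) (x * 1) v := (hasDerivAt_id v).const_mul x
    have h1 := (hm.cos.div (hasDerivAt_pow 1 v) (by simpa using hv0)).neg
    have h2 := ((Si_deriv (x * v)).comp v hm).const_mul x
    refine (h1.sub h2).congr_deriv ?_
    symm
    rw [Real.sinc_of_ne_zero (by positivity)]
    field_simp
    simp

lemma CC_step (n : ℕ) (hn : 2 ≤ n) (x : ℝ) :
    n * (n + 1) * CC (n + 2) x = n * Real.cos x - x * Real.sin x - x ^ 2 * CC n x := by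
  have hl : Filter.Tendsto (fun v : ℝ => -((n:ℝ) * (Real.cos (x * v) / v ^ (n+1)))
      + x * (Real.sin (x * v) / v ^ n)) Filter.atTop
      (nhds (-((n:ℝ) * 0) + x * 0)) := by
    refine (((bdd_div_tendsto _ (fun v => Real.abs_cos_le_one (x * v)) (n+1) (by omega)).const_mul _).neg).add
      (Filter.Tendsto.const_mul x ?_)
    exact bdd_div_tendsto _ (fun v => Real.abs_sin_le_one (x * v)) n (by omega)
  have i1 := (CC_int (n+2) (by omega) x).const_mul ((n:ℝ) * (n + 1))
  have i2 := (CC_int n hn x).const_mul (x ^ 2)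
  have := integral_Ioi_of_hasDerivAt_of_tendsto' (fun v hv => ?_) (i1.add i2) hl
  · simp only [Pi.add_apply] at this
    rw [integral_add i1 i2, integral_const_mul, integral_const_mul] at this
    change (n:ℝ) * (n+1) * CC (n+2) x + x ^ 2 * CC n x = _ at this
    simp at this
    linarith
  · have hv : (1:ℝ) ≤ v := hv
    have hv0 : v ≠ 0 := by linarith
    have hm : HasDerivAt (fun v => x * v) (x * 1) v := (hasDerivAt_id v).const_mul x
    have h1 := ((hm.cos.div (hasDerivAt_pow (n+1) v) (by positivity)).const_mul (n:ℝ)).neg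
    have h2 := ((hm.sin.div (hasDerivAt_pow n v) (by positivity)).const_mul x)
    refine (h1.add h2).congr_deriv ?_
    symm
    obtain ⟨m, rfl⟩ : ∃ m, n = m + 1 := ⟨n - 1, by omega⟩
    rw [Pi.add_apply]
    simp only [add_tsub_cancel_right]
    push_cast
    field_simp
    ring

lemma real_main (p : ℕ) (x : ℝ) (hx : 0 < x) (hc : Real.cos x = 0) :
    (-1) ^ (p+1) * ((2*p+1).factorial : ℝ) * (2 * CC (2*(p+1)) x) / x ^ (2*p+1)
      = 2 * Real.sin x * ∑ j ∈ Finset.Icc 1 p, (-1) ^ j * ((2*j-1).factorial : ℝ) / x ^ (2*j)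
        - 2 * (Si x - Real.pi/2) := by
  induction p with
  | zero =>
    simp [CC_base x hx, hc]
    field_simp
  | succ p ih =>
    rw [Finset.sum_Icc_succ_top (by omega), mul_add (2 * Real.sin x), add_sub_right_comm, ← ih]
    have hs := CC_step (2*(p+1)) (by omega) x
    rw [hc] at hs
    have e : CC (2*(p+1+1)) x = CC (2*(p+1)+2) x := by congr 1
    rw [e]
    have f : ((2*(p+1)+1).factorial : ℝ) = (2*(p+1)+1) * (2*(p+1)) * ((2*p+1).factorial : ℝ) := by
      rw [show 2*(p+1)+1 = (2*p+1)+1+1 by ring, Nat.factorial_succ, Nat.factorial_succ]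
      push_cast; ring
    rw [f, show 2*(p+1)-1 = 2*p+1 by omega]
    push_cast at hs
    have hs' : CC (2*(p+1)+2) x * ((2*(p+1)+1) * (2*(p+1)))
      = - x * Real.sin x - x ^ 2 * CC (2*(p+1)) x := by linarith
    have : (-1) ^ (p+1+1) * ((2*(p+1)+1) * (2*(p+1)) * ((2*p+1).factorial : ℝ)) * (2 * CC (2*(p+1)+2) x)
      = (-1) ^ (p+1+1) * ((2*p+1).factorial : ℝ) * 2 * (- x * Real.sin x - x ^ 2 * CC (2*(p+1)) x) := by
      rw [← hs']; ring
    rw [this]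
    field_simp
    ring

lemma expInt_int (n : ℕ) (hn : 2 ≤ n) (x : ℝ) : IntegrableOn
    (fun v : ℝ => (v:ℂ) ^ (-(n:ℂ)) * Complex.exp (-(Complex.I * x) * v)) (Set.Ioi 1) := by
  refine (pow_int n hn).mono' ?_ ?_
  · exact Measurable.aestronglyMeasurable (by fun_prop)
  refine (ae_restrict_iff' measurableSet_Ioi).2 (Filter.Eventually.of_forall fun v hv => ?_)
  have hv : (1:ℝ) < v := hv
  rw [norm_mul, Complex.norm_exp, Complex.cpow_neg, Complex.cpow_natCast]
  simp [abs_of_pos (by linarith : (0:ℝ) < v)]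

lemma expInt_add (n : ℕ) (hn : 2 ≤ n) (x : ℝ) :
    expInt n (-(Complex.I * x)) + expInt n (Complex.I * x) = ((2 * CC n x : ℝ) : ℂ) := by
  unfold expInt CC
  have h2 := expInt_int n hn x
  have h1 := expInt_int n hn (-x)
  simp only [Complex.ofReal_neg, mul_neg] at h1
  rw [← integral_add h1 h2, ← integral_const_mul, ← integral_complex_ofReal]
  refine setIntegral_congr_fun measurableSet_Ioi fun v hv => ?_
  have hv : (1:ℝ) < v := hv
  rw [Complex.cpow_neg, Complex.cpow_natCast]
  push_cast
  rw [Complex.cos]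
  rw [show - -(Complex.I * (x:ℂ)) * v = x * v * Complex.I by ring,
    show -(Complex.I * (x:ℂ)) * v = -(x * v) * Complex.I by ring]
  field_simp


/-- For all integers `p ≥ 1` and `k ≥ 0`,
`(-1)^p Γ(2p) [E_{2p}(-iπ(k+1/2)) + E_{2p}(iπ(k+1/2))] / (π(k+1/2))^{2p-1}
  = 2(-1)^k ∑_{j=1}^{p-1} (-1)^j Γ(2j)/(π(k+1/2))^{2j} - 2(Si(π(k+1/2)) - π/2)`. -/
theorem stmt_18 (p : ℕ) (hp : 1 ≤ p) (k : ℕ) :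
    (-1) ^ p * Complex.Gamma (2 * (p : ℂ)) *
        (expInt (2 * (p : ℂ)) (-(Complex.I * (Real.pi : ℂ) * ((k : ℂ) + 1/2))) +
          expInt (2 * (p : ℂ)) (Complex.I * (Real.pi : ℂ) * ((k : ℂ) + 1/2))) /
        ((Real.pi : ℂ) * ((k : ℂ) + 1/2)) ^ (2*p - 1)
      = 2 * (-1) ^ k *
          ∑ j ∈ Finset.Icc 1 (p - 1),
            (-1) ^ j * Complex.Gamma (2 * (j : ℂ)) /
              ((Real.pi : ℂ) * ((k : ℂ) + 1/2)) ^ (2*j)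
        - 2 * ((Si (Real.pi * ((k : ℝ) + 1/2)) : ℂ) - (Real.pi : ℂ) / 2) := by
  obtain ⟨q, rfl⟩ : ∃ q, p = q + 1 := ⟨p - 1, by omega⟩
  set x : ℝ := Real.pi * ((k : ℝ) + 1/2) with hxdef
  have hx : 0 < x := by positivity
  have hxe : x = Real.pi / 2 + k * Real.pi := by rw [hxdef]; ring
  have hc : Real.cos x = 0 := by
    rw [hxe, Real.cos_add_nat_mul_pi, Real.cos_pi_div_two, mul_zero]
  have hs : Real.sin x = (-1) ^ k := by
    rw [hxe, Real.sin_add_nat_mul_pi, Real.sin_pi_div_two, mul_one]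
  have hxc : (Real.pi : ℂ) * ((k : ℂ) + 1/2) = (x : ℂ) := by
    rw [hxdef]; push_cast; ring
  have hG : ∀ j : ℕ, 1 ≤ j → Complex.Gamma (2 * (j : ℂ)) = ((2*j-1).factorial : ℂ) := by
    intro j hj
    rw [← Complex.Gamma_nat_eq_factorial]
    congr 1
    rw [Nat.cast_sub (by omega)]
    push_cast; ring
  have hE := expInt_add (2*(q+1)) (by omega) x
  have hM := real_main q x hx hc
  rw [mul_assoc Complex.I, hxc, hG (q+1) (by omega), show 2 * (q+1) - 1 = 2*q+1 by omega,
    show (2 * ((q + 1 : ℕ) : ℂ)) = ((2*(q+1) : ℕ) : ℂ) by push_cast; ring, hE, add_tsub_cancel_right]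
  have hS : ∑ j ∈ Finset.Icc 1 q, (-1) ^ j * Complex.Gamma (2 * (j : ℂ)) / (x : ℂ) ^ (2*j)
      = ((∑ j ∈ Finset.Icc 1 q, (-1) ^ j * ((2*j-1).factorial : ℝ) / x ^ (2*j) : ℝ) : ℂ) := by
    push_cast
    refine Finset.sum_congr rfl fun j hj => ?_
    rw [hG j (Finset.mem_Icc.1 hj).1]
  rw [hS]
  rw [hs] at hM
  exact_mod_cast congrArg (fun r : ℝ => (r : ℂ)) hM
end
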